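/- arXiv:1612.08086 — 3 statements merged into one kernel-verified Lean document; each statement's English description precedes it below -/
import Mathlib

section
/- If f ∈ C⁶[−1,1] then there exists ξ ∈ [−1,1] such that ∫₋₁¹ f(t) dt = (1/2)[(5/9)f(−√15/5) + (8/9)f(0) + (5/9)f(√15/5)] + (1/2)[(1/6)f(−1) + (5/6)f(−√5/5) + (5/6)f(√5/5) + (1/6)f(1)] − f⁽⁶⁾(ξ)/94500. -/
open Set MeasureTheory intervalIntegral Nat in
/-- Truncated power kernels restrict an integral to the part of the interval before the knot. -/
theorem integral_mul_max_sub_pow {g : ℝ → ℝ} {a b x : ℝ} {n : ℕ} (hn : n ≠ 0)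
    (hg : ContinuousOn g (Icc a b)) (hx : x ∈ Icc a b) :
    ∫ t in a..b, g t * max (x - t) 0 ^ n = ∫ t in a..x, g t * (x - t) ^ n := by
  have hint : ∀ c ∈ Icc a b, ∀ d ∈ Icc a b,
      IntervalIntegrable (fun t => g t * max (x - t) 0 ^ n) volume c d := fun c hc d hd =>
    ((hg.mono (uIcc_subset_Icc hc hd)).mul (by fun_prop)).intervalIntegrable
  have hab : a ≤ b := hx.1.trans hx.2
  rw [← integral_add_adjacent_intervals (hint a ⟨le_rfl, hab⟩ x hx) (hint x hx b ⟨hab, le_rfl⟩)]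
  have hright : ∫ t in x..b, g t * max (x - t) 0 ^ n = 0 := by
    rw [integral_congr (g := fun _ => (0 : ℝ)), intervalIntegral.integral_zero]
    intro t ht
    rw [uIcc_of_le hx.2] at ht
    simp [max_eq_right (sub_nonpos.2 ht.1), hn]
  rw [hright, add_zero]
  refine integral_congr fun t ht => ?_
  rw [uIcc_of_le hx.1] at ht
  simp [max_eq_left (sub_nonneg.2 ht.2)]

open Set MeasureTheory intervalIntegral Nat in
/-- Taylor's formula with the remainder written through the Peano kernel. -/
theorem taylorWithinEval_add_integral_max_sub_pow {f : ℝ → ℝ} {a b x : ℝ} {n : ℕ} (hn : n ≠ 0)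
    (hab : a < b) (hf : ContDiffOn ℝ (n + 1 : ℕ) f (Icc a b)) (hx : x ∈ Icc a b) :
    f x = taylorWithinEval f n (Icc a b) a x +
      ∫ t in a..b, iteratedDerivWithin (n + 1) f (Icc a b) t * (max (x - t) 0 ^ n / n !) := by
  have hu := uniqueDiffOn_Icc hab
  have hd : DifferentiableOn ℝ (iteratedDerivWithin n f (Icc a b)) (Icc a b) :=
    hf.differentiableOn_iteratedDerivWithin (by exact_mod_cast n.lt_succ_self) hu
  have hf' : ContDiffOn ℝ n f (Icc a b) := hf.of_le (by exact_mod_cast n.le_succ)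
  have hc : ContinuousOn (iteratedDerivWithin (n + 1) f (Icc a b)) (Icc a b) :=
    hf.continuousOn_iteratedDerivWithin le_rfl hu
  have hsub : Icc a x ⊆ Icc a b := Icc_subset_Icc_right hx.2
  have key := integral_eq_sub_of_hasDerivAt_of_le hx.1
    ((continuousOn_taylorWithinEval (x := x) hu hf').mono hsub)
    (fun t ht => taylorWithinEval_hasDerivAt_Ioo x hab ⟨ht.1, ht.2.trans_le hx.2⟩ hf'
      (hd.mono Ioo_subset_Icc_self))
    (ContinuousOn.intervalIntegrable (by
      rw [uIcc_of_le hx.1]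
      exact ContinuousOn.smul (f := fun t => (n ! : ℝ)⁻¹ * (x - t) ^ n) (by fun_prop)
        (hc.mono hsub)))
  simp only [taylorWithinEval_self] at key
  rw [eq_add_of_sub_eq' key.symm]
  simp_rw [mul_div_assoc', intervalIntegral.integral_div]
  rw [integral_mul_max_sub_pow hn hc hx, ← intervalIntegral.integral_div]
  congr 1
  refine integral_congr fun t _ => ?_
  simp only [smul_eq_mul]
  ring

open Set MeasureTheory intervalIntegral Nat in
/-- The integral of the Taylor expansion at the left endpoint. -/
theorem integral_eq_sum_iteratedDerivWithin_add {f : ℝ → ℝ} {a b : ℝ} (hab : a < b) {n : ℕ}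
    (hf : ContDiffOn ℝ n f (Icc a b)) :
    ∫ t in a..b, f t =
      (∑ k ∈ Finset.range n, iteratedDerivWithin k f (Icc a b) a * ((b - a) ^ (k + 1) / (k + 1)!)) +
        ∫ t in a..b, iteratedDerivWithin n f (Icc a b) t * ((b - t) ^ n / n !) := by
  have hu := uniqueDiffOn_Icc hab
  induction n with
  | zero => simp
  | succ n ih =>
    rw [ih (hf.of_le (by exact_mod_cast n.le_succ)), Finset.sum_range_succ, add_assoc]
    congr 1
    have hd : DifferentiableOn ℝ (iteratedDerivWithin n f (Icc a b)) (Icc a b) :=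
      hf.differentiableOn_iteratedDerivWithin (by exact_mod_cast n.lt_succ_self) hu
    have hc : ContinuousOn (iteratedDerivWithin (n + 1) f (Icc a b)) (Icc a b) :=
      hf.continuousOn_iteratedDerivWithin le_rfl hu
    have hi : IntervalIntegrable
        (fun t => iteratedDerivWithin n f (Icc a b) t * ((b - t) ^ n / n !)) volume a b :=
      ContinuousOn.intervalIntegrable_of_Icc hab.le (hd.continuousOn.mul (by fun_prop))
    have hi' : IntervalIntegrable (fun t => iteratedDerivWithin (n + 1) f (Icc a b) t *
        ((b - t) ^ (n + 1) / (n + 1)!)) volume a b :=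
      ContinuousOn.intervalIntegrable_of_Icc hab.le (hc.mul (by fun_prop))
    have key := integral_eq_sub_of_hasDerivAt_of_le
      (f := fun t => iteratedDerivWithin n f (Icc a b) t * ((b - t) ^ (n + 1) / (n + 1)!))
      hab.le (hd.continuousOn.mul (by fun_prop)) (fun t ht => by
        have h₁ : HasDerivAt (iteratedDerivWithin n f (Icc a b))
            (iteratedDerivWithin (n + 1) f (Icc a b) t) t := by
          rw [iteratedDerivWithin_succ]
          exact (hd t (Ioo_subset_Icc_self ht)).hasDerivWithinAt.hasDerivAt
            (Icc_mem_nhds ht.1 ht.2)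
        have h₂ : HasDerivAt (fun t => (b - t) ^ (n + 1) / ((n + 1)! : ℝ))
            (-((b - t) ^ n / n !)) t := by
          refine ((((hasDerivAt_id t).const_sub b).pow (n + 1)).div_const _).congr_deriv ?_
          have := Nat.factorial_ne_zero n
          rw [Nat.factorial_succ]
          push_cast
          simp only [id]
          field_simp
        exact (h₁.mul h₂).congr_deriv (by rw [mul_neg, ← sub_eq_add_neg])) (hi'.sub hi)
    rw [integral_sub hi' hi] at key
    simp only [sub_self, ne_eq, Nat.succ_ne_zero, not_false_eq_true, zero_pow, zero_div,
      mul_zero, zero_sub] at key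
    linarith

/-- The Peano kernel of order six of the averaged quadrature rule with nodes `0, ±a, ±b, ±1`. -/
noncomputable def gaussLobattoKernel (a b t : ℝ) : ℝ :=
  (5 / 18 * (max (-a - t) 0 ^ 5 / 120) + 4 / 9 * (max (0 - t) 0 ^ 5 / 120) +
    5 / 18 * (max (a - t) 0 ^ 5 / 120)) +
  (5 / 12 * (max (-b - t) 0 ^ 5 / 120) + 5 / 12 * (max (b - t) 0 ^ 5 / 120) +
    1 / 12 * (max (1 - t) 0 ^ 5 / 120)) - (1 - t) ^ 6 / 720

theorem max_zero_pow_five_eq_add (y : ℝ) : max y 0 ^ 5 = y ^ 5 + max (-y) 0 ^ 5 := by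
  rcases le_total y 0 with h | h
  · rw [max_eq_right h, max_eq_left (neg_nonneg.2 h)]; ring
  · rw [max_eq_left h, max_eq_right (neg_nonpos.2 h)]; ring

theorem pow_five_le_max_zero_pow_five (y : ℝ) : y ^ 5 ≤ max y 0 ^ 5 := by
  rw [max_zero_pow_five_eq_add]
  exact le_add_of_nonneg_right (by positivity)

theorem gaussLobattoKernel_neg {a b : ℝ} (ha : a ^ 2 = 3 / 5) (hb : b ^ 2 = 1 / 5) {t : ℝ}
    (ht : t ∈ Set.Icc (-1 : ℝ) 1) : gaussLobattoKernel a b (-t) = gaussLobattoKernel a b t := by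
  have h₁ := max_zero_pow_five_eq_add (-a - t)
  have h₂ := max_zero_pow_five_eq_add (a - t)
  have h₃ := max_zero_pow_five_eq_add (0 - t)
  have h₄ := max_zero_pow_five_eq_add (-b - t)
  have h₅ := max_zero_pow_five_eq_add (b - t)
  rw [show -(-a - t) = a - -t by ring] at h₁
  rw [show -(a - t) = -a - -t by ring] at h₂
  rw [show -(0 - t) = 0 - -t by ring] at h₃
  rw [show -(-b - t) = b - -t by ring] at h₄
  rw [show -(b - t) = -b - -t by ring] at h₅
  have h₆ : max (1 - t) 0 = 1 - t := max_eq_left (by linarith [ht.2])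
  have h₇ : max (1 - -t) 0 = 1 - -t := max_eq_left (by linarith [ht.1])
  rw [gaussLobattoKernel, gaussLobattoKernel, h₁, h₂, h₃, h₄, h₅, h₆, h₇]
  have ha4 : a ^ 4 = 9 / 25 := by rw [show a ^ 4 = (a ^ 2) ^ 2 by ring, ha]; norm_num
  have hb4 : b ^ 4 = 1 / 25 := by rw [show b ^ 4 = (b ^ 2) ^ 2 by ring, hb]; norm_num
  ring_nf
  rw [ha, hb, ha4, hb4]
  ring

theorem gaussLobattoKernel_nonneg_of_nonneg {a b : ℝ} (ha₀ : 0 ≤ a) (hb₀ : 0 ≤ b)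
    (ha : a ^ 2 = 3 / 5) (hb : b ^ 2 = 1 / 5) {t : ℝ} (ht : t ∈ Set.Icc (0 : ℝ) 1) :
    0 ≤ gaussLobattoKernel a b t := by
  obtain ⟨ht₀, ht₁⟩ := ht
  have h₁ : 0 ≤ max (-a - t) 0 ^ 5 := by positivity
  have h₂ : 0 ≤ max (-b - t) 0 ^ 5 := by positivity
  have h₃ : 0 ≤ max (0 - t) 0 ^ 5 := by positivity
  have h₄ : max (1 - t) 0 = 1 - t := max_eq_left (by linarith)
  rw [gaussLobattoKernel, h₄]
  rcases le_total (1 / 2) t with h | h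
  · have h₅ : 0 ≤ max (a - t) 0 ^ 5 := by positivity
    have h₆ : 0 ≤ max (b - t) 0 ^ 5 := by positivity
    have h₇ : 0 ≤ (1 - t) ^ 5 * (t - 1 / 2) :=
      mul_nonneg (pow_nonneg (by linarith) 5) (by linarith)
    linarith
  · have h₅ := pow_five_le_max_zero_pow_five (a - t)
    have h₆ := pow_five_le_max_zero_pow_five (b - t)
    have ha' : 7745 / 10000 ≤ a := by nlinarith
    have hb' : 4472 / 10000 ≤ b := by nlinarith
    have ea : (a - t) ^ 5 = a * (9 / 25 + 6 * t ^ 2 + 5 * t ^ 4) - 9 / 5 * t - 6 * t ^ 3 - t ^ 5 := by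
      linear_combination (a * (a ^ 2 + 3 / 5) - 5 * t * (a ^ 2 + 3 / 5) + 10 * a * t ^ 2
        - 10 * t ^ 3) * ha
    have eb : (b - t) ^ 5 = b * (1 / 25 + 2 * t ^ 2 + 5 * t ^ 4) - 1 / 5 * t - 2 * t ^ 3 - t ^ 5 := by
      linear_combination (b * (b ^ 2 + 1 / 5) - 5 * t * (b ^ 2 + 1 / 5) + 10 * b * t ^ 2
        - 10 * t ^ 3) * hb
    have la := mul_le_mul_of_nonneg_right ha' (show 0 ≤ 9 / 25 + 6 * t ^ 2 + 5 * t ^ 4 by positivity)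
    have lb := mul_le_mul_of_nonneg_right hb' (show 0 ≤ 1 / 25 + 2 * t ^ 2 + 5 * t ^ 4 by positivity)
    have hpoly : 0 ≤ 9 / 1000 - 20 / 1000 * t ^ 2 - 457 / 1000 * t ^ 4 + 4 / 3 * t ^ 5 - t ^ 6 := by
      have hu : 0 ≤ 1 / 2 - t := sub_nonneg.2 h
      calc (0 : ℝ) ≤ 72 / 125 * (1 / 2 - t) ^ 6 + 432 / 125 * t * (1 / 2 - t) ^ 5 +
            208 / 25 * t ^ 2 * (1 / 2 - t) ^ 4 + 256 / 25 * t ^ 3 * (1 / 2 - t) ^ 3 +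
            1223 / 250 * t ^ 4 * (1 / 2 - t) ^ 2 + 89 / 75 * t ^ 5 * (1 / 2 - t) +
            71 / 750 * t ^ 6 := by positivity
        _ = _ := by ring
    nlinarith [sq_nonneg t, sq_nonneg (t ^ 2)]

theorem gaussLobattoKernel_nonneg {a b : ℝ} (ha₀ : 0 ≤ a) (hb₀ : 0 ≤ b)
    (ha : a ^ 2 = 3 / 5) (hb : b ^ 2 = 1 / 5) {t : ℝ} (ht : t ∈ Set.Icc (-1 : ℝ) 1) :
    0 ≤ gaussLobattoKernel a b t := by
  rcases le_total 0 t with h | h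
  · exact gaussLobattoKernel_nonneg_of_nonneg ha₀ hb₀ ha hb ⟨h, ht.2⟩
  · rw [← gaussLobattoKernel_neg ha hb ht]
    exact gaussLobattoKernel_nonneg_of_nonneg ha₀ hb₀ ha hb ⟨by linarith, by linarith [ht.1]⟩

theorem continuous_gaussLobattoKernel (a b : ℝ) : Continuous (gaussLobattoKernel a b) := by
  unfold gaussLobattoKernel
  fun_prop

open Set MeasureTheory intervalIntegral in
/-- Integration against the kernel splits into the contributions of the nodes. -/
theorem integral_mul_gaussLobattoKernel {g : ℝ → ℝ} (hg : ContinuousOn g (Icc (-1) 1)) (a b : ℝ) :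
    ∫ t in (-1 : ℝ)..1, g t * gaussLobattoKernel a b t =
      (5 / 18 * (∫ t in (-1 : ℝ)..1, g t * (max (-a - t) 0 ^ 5 / 120)) +
        4 / 9 * (∫ t in (-1 : ℝ)..1, g t * (max (0 - t) 0 ^ 5 / 120)) +
        5 / 18 * (∫ t in (-1 : ℝ)..1, g t * (max (a - t) 0 ^ 5 / 120))) +
      (5 / 12 * (∫ t in (-1 : ℝ)..1, g t * (max (-b - t) 0 ^ 5 / 120)) +
        5 / 12 * (∫ t in (-1 : ℝ)..1, g t * (max (b - t) 0 ^ 5 / 120)) +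
        1 / 12 * (∫ t in (-1 : ℝ)..1, g t * (max (1 - t) 0 ^ 5 / 120))) -
      ∫ t in (-1 : ℝ)..1, g t * ((1 - t) ^ 6 / 720) := by
  have hi : ∀ x : ℝ, IntervalIntegrable (fun t => g t * (max (x - t) 0 ^ 5 / 120)) volume (-1) 1 :=
    fun x => ContinuousOn.intervalIntegrable_of_Icc (by norm_num) (hg.mul (by fun_prop))
  have hi' : IntervalIntegrable (fun t => g t * ((1 - t) ^ 6 / 720)) volume (-1) 1 :=
    ContinuousOn.intervalIntegrable_of_Icc (by norm_num) (hg.mul (by fun_prop))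
  simp only [← intervalIntegral.integral_const_mul]
  rw [← integral_add ((hi _).const_mul _) ((hi _).const_mul _),
    ← integral_add (((hi _).const_mul _).add ((hi _).const_mul _)) ((hi _).const_mul _),
    ← integral_add ((hi _).const_mul _) ((hi _).const_mul _),
    ← integral_add (((hi _).const_mul _).add ((hi _).const_mul _)) ((hi _).const_mul _),
    ← integral_add ((((hi _).const_mul _).add ((hi _).const_mul _)).add ((hi _).const_mul _))
      ((((hi _).const_mul _).add ((hi _).const_mul _)).add ((hi _).const_mul _)),
    ← integral_sub (((((hi _).const_mul _).add ((hi _).const_mul _)).add ((hi _).const_mul _)).add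
      ((((hi _).const_mul _).add ((hi _).const_mul _)).add ((hi _).const_mul _))) hi']
  refine integral_congr fun t _ => ?_
  simp only [gaussLobattoKernel]
  ring

open Set in
theorem integral_gaussLobattoKernel {a b : ℝ} (ha₀ : 0 ≤ a) (hb₀ : 0 ≤ b)
    (ha : a ^ 2 = 3 / 5) (hb : b ^ 2 = 1 / 5) :
    ∫ t in (-1 : ℝ)..1, gaussLobattoKernel a b t = 1 / 94500 := by
  have ha₁ : a ≤ 1 := by nlinarith
  have hb₁ : b ≤ 1 := by nlinarith
  have hpow : ∀ (x : ℝ) (n : ℕ), ∫ t in (-1 : ℝ)..x, (x - t) ^ n = (x + 1) ^ (n + 1) / (n + 1) := by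
    intro x n
    simp [intervalIntegral.integral_comp_sub_left (fun t => t ^ n) x]
  have hnode : ∀ x ∈ Icc (-1 : ℝ) 1,
      ∫ t in (-1 : ℝ)..1, (1 : ℝ) * (max (x - t) 0 ^ 5 / 120) = (x + 1) ^ 6 / 720 := by
    intro x hx
    simp_rw [mul_div_assoc', intervalIntegral.integral_div]
    rw [integral_mul_max_sub_pow (g := fun _ => (1 : ℝ)) (by norm_num) continuousOn_const hx]
    simp only [one_mul, hpow]
    norm_num
    ring
  have key := integral_mul_gaussLobattoKernel (g := fun _ => (1 : ℝ)) continuousOn_const a b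
  rw [hnode _ ⟨by linarith, by linarith⟩, hnode _ ⟨by linarith, by linarith⟩,
    hnode _ ⟨by linarith, by linarith⟩, hnode _ ⟨by linarith, by linarith⟩,
    hnode _ ⟨by linarith, by linarith⟩, hnode _ ⟨by linarith, by linarith⟩] at key
  simp only [one_mul, intervalIntegral.integral_div, hpow] at key
  rw [key]
  have ha4 : a ^ 4 = 9 / 25 := by rw [show a ^ 4 = (a ^ 2) ^ 2 by ring, ha]; norm_num
  have hb4 : b ^ 4 = 1 / 25 := by rw [show b ^ 4 = (b ^ 2) ^ 2 by ring, hb]; norm_num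
  have ha6 : a ^ 6 = 27 / 125 := by rw [show a ^ 6 = (a ^ 2) ^ 3 by ring, ha]; norm_num
  have hb6 : b ^ 6 = 1 / 125 := by rw [show b ^ 6 = (b ^ 2) ^ 3 by ring, hb]; norm_num
  norm_num
  ring_nf
  rw [ha, hb, ha4, hb4, ha6, hb6]
  norm_num

open Set in
/-- The error of the averaged quadrature rule in Peano form. -/
theorem integral_iteratedDerivWithin_mul_gaussLobattoKernel {f : ℝ → ℝ}
    (hf : ContDiffOn ℝ 6 f (Icc (-1 : ℝ) 1)) {a b : ℝ} (ha₀ : 0 ≤ a) (hb₀ : 0 ≤ b)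
    (ha : a ^ 2 = 3 / 5) (hb : b ^ 2 = 1 / 5) :
    ∫ t in (-1 : ℝ)..1, iteratedDerivWithin 6 f (Icc (-1) 1) t * gaussLobattoKernel a b t =
      (5 / 18 * f (-a) + 4 / 9 * f 0 + 5 / 18 * f a) +
      (5 / 12 * f (-b) + 5 / 12 * f b + 1 / 12 * f 1) + 1 / 12 * f (-1) -
      ∫ t in (-1 : ℝ)..1, f t := by
  have ha₁ : a ≤ 1 := by nlinarith
  have hb₁ : b ≤ 1 := by nlinarith
  have hlt : (-1 : ℝ) < 1 := by norm_num
  have hf' : ContDiffOn ℝ (5 + 1 : ℕ) f (Icc (-1 : ℝ) 1) := hf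
  have hc : ContinuousOn (iteratedDerivWithin 6 f (Icc (-1) 1)) (Icc (-1 : ℝ) 1) :=
    hf.continuousOn_iteratedDerivWithin (m := 6) le_rfl (uniqueDiffOn_Icc hlt)
  have hnode := fun (x : ℝ) (hx : x ∈ Icc (-1 : ℝ) 1) =>
    taylorWithinEval_add_integral_max_sub_pow (n := 5) (by norm_num) hlt hf' hx
  have hint := integral_eq_sum_iteratedDerivWithin_add (n := 6) hlt hf
  simp only [taylorWithinEval_succ, taylor_within_zero_eval, Nat.factorial, smul_eq_mul] at hnode
  simp only [Finset.sum_range_succ, Finset.sum_range_zero, Nat.factorial,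
    iteratedDerivWithin_zero] at hint
  norm_num at hnode hint
  rw [integral_mul_gaussLobattoKernel hc, hint, hnode (-a) (by linarith) (by linarith),
    hnode a (by linarith) (by linarith), hnode (-b) (by linarith) (by linarith),
    hnode b (by linarith) (by linarith), hnode 0 (by linarith) (by linarith),
    hnode 1 (by linarith) (by linarith)]
  have ha4 : a ^ 4 = 9 / 25 := by rw [show a ^ 4 = (a ^ 2) ^ 2 by ring, ha]; norm_num
  have hb4 : b ^ 4 = 1 / 25 := by rw [show b ^ 4 = (b ^ 2) ^ 2 by ring, hb]; norm_num
  simp only [zero_sub]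
  ring_nf
  rw [ha, hb, ha4, hb4]
  ring


theorem error_gauss3_lobatto4 (f : ℝ → ℝ) (hf : ContDiffOn ℝ 6 f (Set.Icc (-1:ℝ) 1)) :
    ∃ ξ ∈ Set.Icc (-1:ℝ) 1,
      (∫ t in (-1:ℝ)..1, f t) =
        (1 / 2) * ((5 / 9) * f (-(Real.sqrt 15) / 5) + (8 / 9) * f 0 +
          (5 / 9) * f (Real.sqrt 15 / 5)) +
        (1 / 2) * ((1 / 6) * f (-1) + (5 / 6) * f (-(Real.sqrt 5) / 5) +
          (5 / 6) * f (Real.sqrt 5 / 5) + (1 / 6) * f 1) -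
        iteratedDerivWithin 6 f (Set.Icc (-1:ℝ) 1) ξ / 94500 := by
  have ha₀ : 0 ≤ Real.sqrt 15 / 5 := by positivity
  have hb₀ : 0 ≤ Real.sqrt 5 / 5 := by positivity
  have ha : (Real.sqrt 15 / 5) ^ 2 = 3 / 5 := by
    rw [div_pow, Real.sq_sqrt (by norm_num)]; norm_num
  have hb : (Real.sqrt 5 / 5) ^ 2 = 1 / 5 := by
    rw [div_pow, Real.sq_sqrt (by norm_num)]; norm_num
  have huIcc : Set.uIcc (-1 : ℝ) 1 = Set.Icc (-1) 1 := Set.uIcc_of_le (by norm_num)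
  obtain ⟨ξ, hξ, h⟩ := exists_eq_const_mul_intervalIntegral_of_nonneg
    (f := iteratedDerivWithin 6 f (Set.Icc (-1 : ℝ) 1))
    (huIcc ▸ hf.continuousOn_iteratedDerivWithin (m := 6) le_rfl (uniqueDiffOn_Icc (by norm_num)))
    ((continuous_gaussLobattoKernel (Real.sqrt 15 / 5) (Real.sqrt 5 / 5)).intervalIntegrable
      (μ := MeasureTheory.volume) (-1) 1)
    (fun t ht => gaussLobattoKernel_nonneg ha₀ hb₀ ha hb (huIcc ▸ Set.uIoc_subset_uIcc ht))
  refine ⟨ξ, huIcc ▸ hξ, ?_⟩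
  rw [integral_iteratedDerivWithin_mul_gaussLobattoKernel hf ha₀ hb₀ ha hb,
    integral_gaussLobattoKernel ha₀ hb₀ ha hb] at h
  rw [neg_div, neg_div]
  linarith
end

section
/- If f ∈ C⁶[−1,1] with f⁽⁶⁾ ≥ 0 on [−1,1], then (1/2)[(5/9)f(−√15/5) + (8/9)f(0) + (5/9)f(√15/5)] + (1/2)[(1/6)f(−1) + (5/6)f(−√5/5) + (5/6)f(√5/5) + (1/6)f(1)] ≥ ∫₋₁¹ f(t) dt. -/
open intervalIntegral in
/-- Taylor's formula with integral remainder for a primitive, stated for a chain of successive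
derivatives `D 0, D 1, …, D n`. -/
lemma integral_eq_sum_add_integral_remainder {D : ℕ → ℝ → ℝ} {n : ℕ} {x : ℝ} (hx : 0 ≤ x)
    (hc : ∀ k ≤ n, ContinuousOn (D k) (Set.Icc 0 x))
    (hd : ∀ k < n, ∀ t ∈ Set.Ioo 0 x, HasDerivAt (D k) (D (k + 1) t) t) :
    ∫ t in (0:ℝ)..x, D 0 t =
      ∑ k ∈ Finset.range n, D k 0 * x ^ (k + 1) / (k + 1).factorial +
        ∫ t in (0:ℝ)..x, (x - t) ^ n / n.factorial * D n t := by
  induction n with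
  | zero => simp
  | succ n ih =>
    rw [ih (fun k hk => hc k (by lia)) (fun k hk => hd k (by lia)), Finset.sum_range_succ,
      add_assoc]
    congr 1
    have hfac : ((n + 1).factorial : ℝ) = (n + 1) * n.factorial := by
      rw [Nat.factorial_succ]; push_cast; ring
    have hn : (n.factorial : ℝ) ≠ 0 := by positivity
    have hcn := hc n (by lia)
    have hcn1 := hc (n + 1) le_rfl
    have hi : IntervalIntegrable (fun t => (x - t) ^ n / n.factorial * D n t)
        MeasureTheory.volume 0 x :=
      ContinuousOn.intervalIntegrable (by rw [Set.uIcc_of_le hx]; fun_prop)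
    have hi' : IntervalIntegrable (fun t => (x - t) ^ (n + 1) / (n + 1).factorial * D (n + 1) t)
        MeasureTheory.volume 0 x :=
      ContinuousOn.intervalIntegrable (by rw [Set.uIcc_of_le hx]; fun_prop)
    have key := integral_eq_sub_of_hasDerivAt_of_le
      (f := fun t => (x - t) ^ (n + 1) / (n + 1).factorial * D n t) hx (by fun_prop)
      (fun t ht => by
        have h1 : HasDerivAt (fun t => (x - t) ^ (n + 1) / ((n + 1).factorial : ℝ))
            (-((x - t) ^ n / n.factorial)) t := by
          convert! (((hasDerivAt_id t).const_sub x).pow (n + 1)).div_const _ using 1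
          rw [hfac]
          simp only [Nat.cast_add, Nat.cast_one, add_tsub_cancel_right, id]
          field_simp
        exact h1.mul (hd n (by lia) t ht))
      (by simpa only [neg_mul, neg_add_eq_sub] using hi'.sub hi)
    simp only [neg_mul, neg_add_eq_sub] at key
    rw [integral_sub hi' hi] at key
    simp only [sub_self, sub_zero, ne_eq, Nat.add_eq_zero_iff, one_ne_zero, and_false,
      not_false_eq_true, zero_pow, zero_div, zero_mul, zero_sub] at key
    linear_combination -key

open intervalIntegral in
/-- Taylor's formula at `0`, with the remainder written as an integral of a truncated power over
an interval `[0, c]` that does not depend on the point. -/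
lemma eq_sum_add_integral_truncated_pow {D : ℕ → ℝ → ℝ} {n : ℕ} {x c : ℝ} (hx : 0 ≤ x)
    (hxc : x ≤ c) (hc : ∀ k ≤ n + 1, ContinuousOn (D k) (Set.Icc 0 c))
    (hd : ∀ k < n + 1, ∀ t ∈ Set.Ioo 0 c, HasDerivAt (D k) (D (k + 1) t) t) (hn : n ≠ 0) :
    D 0 x = ∑ k ∈ Finset.range (n + 1), D k 0 * x ^ k / k.factorial +
        ∫ t in (0:ℝ)..c, max (x - t) 0 ^ n / n.factorial * D (n + 1) t := by
  have hsub : Set.Icc 0 x ⊆ Set.Icc 0 c := Set.Icc_subset_Icc_right hxc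
  have hsub' : Set.Ioo 0 x ⊆ Set.Ioo 0 c := Set.Ioo_subset_Ioo_right hxc
  have hcn := hc (n + 1) le_rfl
  have hftc := integral_eq_sub_of_hasDerivAt_of_le hx ((hc 0 (by lia)).mono hsub)
    (fun t ht => hd 0 (by lia) t (hsub' ht))
    (ContinuousOn.intervalIntegrable
      (by rw [Set.uIcc_of_le hx]; exact (hc 1 (by lia)).mono hsub))
  have htaylor := integral_eq_sum_add_integral_remainder (D := fun k => D (k + 1)) (n := n) hx
    (fun k hk => (hc (k + 1) (by lia)).mono hsub)
    (fun k hk t ht => hd (k + 1) (by lia) t (hsub' ht))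
  have hcont : ContinuousOn (fun t => max (x - t) 0 ^ n / n.factorial * D (n + 1) t)
      (Set.Icc 0 c) := by fun_prop
  have hsplit := integral_add_adjacent_intervals (a := 0) (b := x) (c := c)
    (μ := MeasureTheory.volume)
    (ContinuousOn.intervalIntegrable (by rw [Set.uIcc_of_le hx]; exact hcont.mono hsub))
    (ContinuousOn.intervalIntegrable
      (by rw [Set.uIcc_of_le hxc]; exact hcont.mono (Set.Icc_subset_Icc_left hx)))
  have hleft : ∫ t in (0:ℝ)..x, max (x - t) 0 ^ n / n.factorial * D (n + 1) t =
      ∫ t in (0:ℝ)..x, (x - t) ^ n / n.factorial * D (n + 1) t := by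
    refine integral_congr fun t ht => ?_
    rw [Set.uIcc_of_le hx] at ht
    simp only [max_eq_left (sub_nonneg.2 ht.2)]
  have hright : ∫ t in x..c, max (x - t) 0 ^ n / n.factorial * D (n + 1) t = 0 := by
    refine (integral_congr (g := fun _ => 0) fun t ht => ?_).trans (by simp)
    rw [Set.uIcc_of_le hxc] at ht
    simp [max_eq_right (sub_nonpos.2 ht.1), hn]
  rw [← hsplit, hleft, hright, Finset.sum_range_succ']
  simp only [zero_add, pow_zero, Nat.factorial_zero, Nat.cast_one, div_one, mul_one, add_zero] at *
  linarith

/-- The Peano kernel of the averaged quadrature is nonnegative. -/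
lemma gauss3_lobatto4_kernel_nonneg {a b t : ℝ} (ha : a ^ 2 = 3 / 5) (hb : b ^ 2 = 1 / 5)
    (ha' : 0.7745 ≤ a) (hb' : 0.4472 ≤ b) (h0 : 0 ≤ t) (h1 : t ≤ 1) :
    0 ≤ 5 / 18 * max (a - t) 0 ^ 5 + 5 / 12 * max (b - t) 0 ^ 5 + 1 / 12 * (1 - t) ^ 5
      - (1 - t) ^ 6 / 6 := by
  have hA : 0 ≤ max (a - t) 0 ^ 5 := by positivity
  have hB : 0 ≤ max (b - t) 0 ^ 5 := by positivity
  rcases le_total (1 / 2) t with ht | ht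
  · have : 0 ≤ (1 - t) ^ 5 * (2 * t - 1) :=
      mul_nonneg (pow_nonneg (by linarith) 5) (by linarith)
    linarith [show (1 - t) ^ 5 * (2 * t - 1) = (1 - t) ^ 5 - 2 * (1 - t) ^ 6 by ring]
  · rw [max_eq_left (by linarith : 0 ≤ a - t)] at *
    rcases le_total b t with hbt | hbt
    · have h5 : (1 - t) ^ 5 ≤ (11 / 6 * (a - t)) ^ 5 :=
        pow_le_pow_left₀ (by linarith) (by linarith) 5
      have : (1 - t) ^ 5 * (1 - 2 * t) ≤ (11 / 6 * (a - t)) ^ 5 * 0.1056 :=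
        mul_le_mul h5 (by linarith) (by linarith) (pow_nonneg (by linarith) 5)
      rw [mul_pow] at this
      linarith [show (1 - t) ^ 5 * (1 - 2 * t) = 2 * (1 - t) ^ 6 - (1 - t) ^ 5 by ring]
    · rw [max_eq_left (by linarith : 0 ≤ b - t)] at *
      have hbu : b ≤ 0.45 := by nlinarith
      have hquad : t ^ 2 * (0.076 - 2 / 9 * t + 1 / 6 * t ^ 2) ≤ 0.003 := by
        nlinarith [mul_nonneg h0 (sub_nonneg.2 hbt), sq_nonneg (t - 0.35),
          mul_nonneg h0 (sq_nonneg (t - 0.35)), sq_nonneg (t * (t - 0.35))]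
      have ht2 : t ^ 2 ≤ 1 / 5 := hb ▸ pow_le_pow_left₀ h0 hbt 2
      have hexp : 5 / 18 * (a - t) ^ 5 + 5 / 12 * (b - t) ^ 5 + 1 / 12 * (1 - t) ^ 5
          - (1 - t) ^ 6 / 6 =
          (-1 / 12 + a / 10 + b / 60) + (-5 / 3 + 5 / 3 * a + 5 / 6 * b) * t ^ 2 +
          (-25 / 12 + 25 / 18 * a + 25 / 12 * b) * t ^ 4 + 2 / 9 * t ^ 5 - t ^ 6 / 6 := by
        linear_combination
          (5 / 18 * (a * (a ^ 2 + 3 / 5) - 5 * t * (a ^ 2 + 3 / 5) + 10 * a * t ^ 2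
            - 10 * t ^ 3)) * ha +
          (5 / 12 * (b * (b ^ 2 + 1 / 5) - 5 * t * (b ^ 2 + 1 / 5) + 10 * b * t ^ 2
            - 10 * t ^ 3)) * hb
      have h2 : 0 ≤ (-5 / 3 + 5 / 3 * a + 5 / 6 * b + 0.0032) * t ^ 2 :=
        mul_nonneg (by linarith) (by positivity)
      have h4 : 0 ≤ (-25 / 12 + 25 / 18 * a + 25 / 12 * b + 0.076) * t ^ 4 :=
        mul_nonneg (by linarith) (by positivity)
      have h6 := mul_le_mul_of_nonneg_left hquad (sq_nonneg t)
      rw [hexp]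
      linarith

open intervalIntegral in
/-- The quadrature inequality on `[0, 1]` for a chain of derivatives whose odd members vanish
at `0`. -/
lemma integral_le_gauss3_lobatto4_of_even {G : ℕ → ℝ → ℝ} {a b : ℝ}
    (ha : a ^ 2 = 3 / 5) (hb : b ^ 2 = 1 / 5) (ha' : 0.7745 ≤ a) (hb' : 0.4472 ≤ b)
    (hc : ∀ k ≤ 6, ContinuousOn (G k) (Set.Icc 0 1))
    (hd : ∀ k < 6, ∀ t ∈ Set.Ioo 0 1, HasDerivAt (G k) (G (k + 1) t) t)
    (h1 : G 1 0 = 0) (h3 : G 3 0 = 0) (h5 : G 5 0 = 0)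
    (h6 : ∀ t ∈ Set.Icc 0 1, 0 ≤ G 6 t) :
    ∫ t in (0:ℝ)..1, G 0 t ≤
      5 / 18 * G 0 a + 2 / 9 * G 0 0 + 5 / 12 * G 0 b + 1 / 12 * G 0 1 := by
  have hI := integral_eq_sum_add_integral_remainder zero_le_one hc hd
  have hTa := eq_sum_add_integral_truncated_pow (n := 5) (by linarith : 0 ≤ a)
    (by nlinarith : a ≤ 1) hc hd (by norm_num)
  have hTb := eq_sum_add_integral_truncated_pow (n := 5) (by linarith : 0 ≤ b)
    (by nlinarith : b ≤ 1) hc hd (by norm_num)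
  have hT1 := eq_sum_add_integral_truncated_pow (n := 5) zero_le_one le_rfl hc hd (by norm_num)
  have hcn := hc 6 le_rfl
  have hint : ∀ x : ℝ, IntervalIntegrable
      (fun t => max (x - t) 0 ^ 5 / (Nat.factorial 5 : ℝ) * G 6 t) MeasureTheory.volume 0 1 :=
    fun x => ContinuousOn.intervalIntegrable (by rw [Set.uIcc_of_le zero_le_one]; fun_prop)
  have hint' : IntervalIntegrable
      (fun t => (1 - t) ^ 6 / (Nat.factorial 6 : ℝ) * G 6 t) MeasureTheory.volume 0 1 :=
    ContinuousOn.intervalIntegrable (by rw [Set.uIcc_of_le zero_le_one]; fun_prop)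
  have hpos : 0 ≤ ∫ t in (0:ℝ)..1,
      (5 / 18 * (max (a - t) 0 ^ 5 / (Nat.factorial 5 : ℝ) * G 6 t) +
        5 / 12 * (max (b - t) 0 ^ 5 / (Nat.factorial 5 : ℝ) * G 6 t) +
        1 / 12 * (max (1 - t) 0 ^ 5 / (Nat.factorial 5 : ℝ) * G 6 t) -
        (1 - t) ^ 6 / (Nat.factorial 6 : ℝ) * G 6 t) := by
    refine integral_nonneg zero_le_one fun t ht => ?_
    have hk := mul_nonneg (gauss3_lobatto4_kernel_nonneg ha hb ha' hb' ht.1 ht.2) (h6 t ht)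
    rw [max_eq_left (sub_nonneg.2 ht.2)]
    norm_num [Nat.factorial]
    linarith
  rw [integral_sub ((((hint a).const_mul _).add ((hint b).const_mul _)).add
      ((hint 1).const_mul _)) hint',
    integral_add (((hint a).const_mul _).add ((hint b).const_mul _)) ((hint 1).const_mul _),
    integral_add ((hint a).const_mul _) ((hint b).const_mul _),
    integral_const_mul, integral_const_mul, integral_const_mul] at hpos
  have ha4 : a ^ 4 = 9 / 25 := by rw [show a ^ 4 = (a ^ 2) ^ 2 by ring, ha]; norm_num
  have hb4 : b ^ 4 = 1 / 25 := by rw [show b ^ 4 = (b ^ 2) ^ 2 by ring, hb]; norm_num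
  rw [hI, hTa, hTb, hT1]
  simp only [Finset.sum_range_succ, Finset.sum_range_zero, h1, h3, h5, ha, hb, ha4, hb4,
    Nat.reduceAdd]
  simp only [show Nat.factorial 0 = 1 from rfl, show Nat.factorial 1 = 1 from rfl,
    show Nat.factorial 2 = 2 from rfl, show Nat.factorial 3 = 6 from rfl,
    show Nat.factorial 4 = 24 from rfl, show Nat.factorial 5 = 120 from rfl,
    show Nat.factorial 6 = 720 from rfl] at hpos ⊢
  push_cast at hpos ⊢
  linarith

theorem gauss3_lobatto4_average_ge_integral (f : ℝ → ℝ)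
    (hf : ContDiffOn ℝ 6 f (Set.Icc (-1:ℝ) 1))
    (h6 : ∀ x ∈ Set.Icc (-1:ℝ) 1, 0 ≤ iteratedDerivWithin 6 f (Set.Icc (-1:ℝ) 1) x) :
    (∫ t in (-1:ℝ)..1, f t) ≤
      (1 / 2) * ((5 / 9) * f (-(Real.sqrt 15) / 5) + (8 / 9) * f 0 +
        (5 / 9) * f (Real.sqrt 15 / 5)) +
      (1 / 2) * ((1 / 6) * f (-1) + (5 / 6) * f (-(Real.sqrt 5) / 5) +
        (5 / 6) * f (Real.sqrt 5 / 5) + (1 / 6) * f 1) := by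
  set s := Set.Icc (-1:ℝ) 1
  have hu : UniqueDiffOn ℝ s := uniqueDiffOn_Icc (by norm_num)
  have hc : ∀ k ≤ 6, ContinuousOn (iteratedDerivWithin k f s) s := fun k hk =>
    hf.continuousOn_iteratedDerivWithin (by exact_mod_cast hk) hu
  have hd : ∀ k < 6, ∀ t ∈ Set.Ioo (-1:ℝ) 1,
      HasDerivAt (iteratedDerivWithin k f s) (iteratedDerivWithin (k + 1) f s t) t := by
    intro k hk t ht
    rw [iteratedDerivWithin_succ]
    exact ((hf.differentiableOn_iteratedDerivWithin (by exact_mod_cast hk) hu t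
      (Set.Ioo_subset_Icc_self ht)).hasDerivWithinAt).hasDerivAt (Icc_mem_nhds ht.1 ht.2)
  have hpos : Set.Icc (0:ℝ) 1 ⊆ s := Set.Icc_subset_Icc_left (by norm_num)
  have hneg : Set.MapsTo Neg.neg (Set.Icc (0:ℝ) 1) s := fun t ht =>
    ⟨by linarith [ht.2], by linarith [ht.1]⟩
  have h15 : Real.sqrt 15 ^ 2 = 15 := Real.sq_sqrt (by norm_num)
  have h5 : Real.sqrt 5 ^ 2 = 5 := Real.sq_sqrt (by norm_num)
  have main := integral_le_gauss3_lobatto4_of_even (a := Real.sqrt 15 / 5) (b := Real.sqrt 5 / 5)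
    (G := fun k t => iteratedDerivWithin k f s t + (-1) ^ k * iteratedDerivWithin k f s (-t))
    (by rw [div_pow, h15]; norm_num) (by rw [div_pow, h5]; norm_num)
    (by linarith [Real.le_sqrt_of_sq_le (by norm_num : (3.8725:ℝ) ^ 2 ≤ 15)])
    (by linarith [Real.le_sqrt_of_sq_le (by norm_num : (2.236:ℝ) ^ 2 ≤ 5)])
    (fun k hk => ((hc k hk).mono hpos).add
      (((hc k hk).comp continuousOn_neg hneg).const_smul ((-1 : ℝ) ^ k)))
    (fun k hk t ht => by
      have hright := hd k hk t ⟨by linarith [ht.1], ht.2⟩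
      have hleft := (hd k hk (-t) ⟨by linarith [ht.2], by linarith [ht.1]⟩).comp t
        (hasDerivAt_neg t)
      convert! hright.add (hleft.const_mul ((-1 : ℝ) ^ k)) using 1
      ring)
    (by norm_num) (by norm_num) (by norm_num)
    (fun t ht => by
      have := h6 t (hpos ht)
      have := h6 (-t) (hneg ht)
      norm_num
      linarith)
  have hf0 : ContinuousOn f s := hf.continuousOn
  have hi : IntervalIntegrable f MeasureTheory.volume 0 1 :=
    ContinuousOn.intervalIntegrable (by rw [Set.uIcc_of_le zero_le_one]; exact hf0.mono hpos)
  have hi' : IntervalIntegrable f MeasureTheory.volume (-1) 0 :=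
    ContinuousOn.intervalIntegrable (by
      rw [Set.uIcc_of_le (by norm_num)]
      exact hf0.mono (Set.Icc_subset_Icc_right zero_le_one))
  have hi'' : IntervalIntegrable (fun t => f (-t)) MeasureTheory.volume 0 1 :=
    ContinuousOn.intervalIntegrable (by
      rw [Set.uIcc_of_le zero_le_one]; exact hf0.comp continuousOn_neg hneg)
  simp only [iteratedDerivWithin_zero, pow_zero, one_mul, neg_zero] at main
  rw [intervalIntegral.integral_add hi hi'', intervalIntegral.integral_comp_neg, neg_zero] at main
  rw [← intervalIntegral.integral_add_adjacent_intervals hi' hi, neg_div, neg_div]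
  linarith
end

section
/- If f ∈ C⁶[−1,1] with f⁽⁶⁾ ≥ 0 on [−1,1], then 0 ≤ ∫₋₁¹ f(t) dt − [(5/9)f(−√15/5) + (8/9)f(0) + (5/9)f(√15/5)] ≤ [(1/6)f(−1) + (5/6)f(−√5/5) + (5/6)f(√5/5) + (1/6)f(1)] − ∫₋₁¹ f(t) dt. That is, the remainder of the 3-point Gauss quadrature is nonnegative and not greater than the remainder of the 4-point Lobatto quadrature for 5-convex functions. -/
/-- The Taylor polynomial at `t`, evaluated at `c`, of a function whose successive derivatives are
`g 0, g 1, …`. -/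
noncomputable def taylorSum (g : ℕ → ℝ → ℝ) (n : ℕ) (c t : ℝ) : ℝ :=
  ∑ k ∈ Finset.range (n + 1), (c - t) ^ k / (k.factorial : ℝ) * g k t

theorem taylorSum_self (g : ℕ → ℝ → ℝ) (n : ℕ) (c : ℝ) : taylorSum g n c c = g 0 c := by
  simp [taylorSum, Finset.sum_range_succ']

theorem continuousOn_taylorSum {g : ℕ → ℝ → ℝ} {n : ℕ} {s : Set ℝ} (c : ℝ)
    (hg : ∀ k ≤ n, ContinuousOn (g k) s) : ContinuousOn (taylorSum g n c) s := by
  unfold taylorSum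
  refine continuousOn_finsetSum _ fun k hk => ContinuousOn.mul (by fun_prop) (hg k ?_)
  exact Nat.lt_succ_iff.mp (Finset.mem_range.mp hk)

theorem hasDerivAt_taylorSum {g : ℕ → ℝ → ℝ} {n : ℕ} {t : ℝ} (c : ℝ)
    (hg : ∀ k ≤ n, HasDerivAt (g k) (g (k + 1) t) t) :
    HasDerivAt (taylorSum g n c) ((c - t) ^ n / (n.factorial : ℝ) * g (n + 1) t) t := by
  induction n with
  | zero =>
    have h : taylorSum g 0 c = g 0 := funext fun x => by simp [taylorSum]
    simpa [h] using hg 0 le_rfl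
  | succ n ih =>
    have hpow : HasDerivAt (fun x : ℝ => (c - x) ^ (n + 1) / ((n + 1).factorial : ℝ))
        (-((c - t) ^ n / (n.factorial : ℝ))) t := by
      refine ((((hasDerivAt_id t).const_sub c).pow (n + 1)).div_const
        ((n + 1).factorial : ℝ)).congr_deriv ?_
      rw [Nat.factorial_succ]
      push_cast
      simp
      field_simp
    have hsum := (ih fun k hk => hg k (by lia)).add (hpow.mul (hg (n + 1) le_rfl))
    have hsucc : taylorSum g (n + 1) c = taylorSum g n c +
        (fun x : ℝ => (c - x) ^ (n + 1) / ((n + 1).factorial : ℝ)) * g (n + 1) :=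
      funext fun x => Finset.sum_range_succ _ (n + 1)
    rw [hsucc]
    exact hsum.congr_deriv (by ring)

/-- Monotonicity of a combination of Taylor polynomials from the sign of its Peano kernel. -/
theorem weighted_taylorSum_le {g : ℕ → ℝ → ℝ}
    (hc : ∀ k ≤ 6, ContinuousOn (g k) (Set.Icc 0 1))
    (hd : ∀ k ≤ 6, ∀ t ∈ Set.Ioo (0 : ℝ) 1, HasDerivAt (g k) (g (k + 1) t) t)
    (hpos : ∀ t ∈ Set.Ioo (0 : ℝ) 1, 0 ≤ g 7 t)
    (α β γ δ a b : ℝ) {x y : ℝ} (hx : 0 ≤ x) (hxy : x ≤ y) (hy : y ≤ 1)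
    (hker : ∀ t ∈ Set.Ioo x y,
      0 ≤ α * (1 - t) ^ 6 + 6 * (β * (1 - t) ^ 5 + γ * (b - t) ^ 5 + δ * (a - t) ^ 5)) :
    α * taylorSum g 6 1 x + (β * taylorSum (fun k => g (k + 1)) 5 1 x +
        γ * taylorSum (fun k => g (k + 1)) 5 b x + δ * taylorSum (fun k => g (k + 1)) 5 a x) ≤
      α * taylorSum g 6 1 y + (β * taylorSum (fun k => g (k + 1)) 5 1 y +
        γ * taylorSum (fun k => g (k + 1)) 5 b y + δ * taylorSum (fun k => g (k + 1)) 5 a y) := by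
  have hcont₀ (c : ℝ) : ContinuousOn (taylorSum g 6 c) (Set.Icc x y) :=
    (continuousOn_taylorSum c hc).mono (Set.Icc_subset_Icc hx hy)
  have hcont₁ (c : ℝ) : ContinuousOn (taylorSum (fun k => g (k + 1)) 5 c) (Set.Icc x y) :=
    (continuousOn_taylorSum c fun k hk => hc (k + 1) (by lia)).mono (Set.Icc_subset_Icc hx hy)
  have hderiv (t : ℝ) (ht : t ∈ Set.Ioo x y) := by
    have ht' : t ∈ Set.Ioo (0 : ℝ) 1 := Set.Ioo_subset_Ioo hx hy ht
    have h₀ (c : ℝ) := hasDerivAt_taylorSum (n := 6) c fun k hk => hd k hk t ht'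
    have h₁ (c : ℝ) := hasDerivAt_taylorSum (g := fun k => g (k + 1)) (n := 5) c
      fun k hk => hd (k + 1) (by lia) t ht'
    exact ((h₀ 1).const_mul α).add ((((h₁ 1).const_mul β).add ((h₁ b).const_mul γ)).add
      ((h₁ a).const_mul δ))
  refine monotoneOn_of_deriv_nonneg (convex_Icc x y) (ContinuousOn.add ((hcont₀ 1).const_mul α)
    ((((hcont₁ 1).const_mul β).add ((hcont₁ b).const_mul γ)).add ((hcont₁ a).const_mul δ)))
    ?_ ?_ (Set.left_mem_Icc.mpr hxy) (Set.right_mem_Icc.mpr hxy) hxy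
  · rw [interior_Icc]
    exact fun t ht => (hderiv t ht).differentiableAt.differentiableWithinAt
  · rw [interior_Icc]
    intro t ht
    rw [(hderiv t ht).deriv]
    have h := mul_nonneg (hker t ht) (hpos t (Set.Ioo_subset_Ioo hx hy ht))
    norm_num [Nat.factorial]
    linarith

theorem gauss3_kernel_nonneg {b t : ℝ} (hb : b ≤ 31 / 40) (ht : 0 ≤ t) (htb : t ≤ b) :
    0 ≤ (1 - t) ^ 6 - 10 / 3 * (b - t) ^ 5 := by
  have hmono : (b - t) ^ 5 ≤ (31 / 40 - t) ^ 5 := by gcongr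
  have hu : 0 ≤ 31 / 40 - t := by linarith
  have h (i j : ℕ) : 0 ≤ t ^ i * (31 / 40 - t) ^ j := by positivity
  linarith [h 0 6, h 1 5, h 2 4, h 3 3, h 4 2, h 5 1, h 6 0]

theorem lobatto4_kernel_nonneg_of_le {b t : ℝ} (hb : 1549 / 2000 ≤ b) (ht : 3 / 20 ≤ t)
    (htb : t ≤ b) (hb1 : b ≤ 1) :
    0 ≤ 10 / 3 * (b - t) ^ 5 - (1 - 2 * t) * (1 - t) ^ 5 := by
  rcases le_total t (1 / 2) with hth | hth
  · have h₀ : 0 ≤ 1549 / 2000 - t := by linarith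
    have hmono : (1549 / 2000 - t) ^ 5 ≤ (b - t) ^ 5 := by gcongr
    have hu : 0 ≤ t - 3 / 20 := by linarith
    have hv : 0 ≤ 1 / 2 - t := by linarith
    have h (i j : ℕ) : 0 ≤ (t - 3 / 20) ^ i * (1 / 2 - t) ^ j := by positivity
    linarith [h 0 6, h 1 5, h 2 4, h 3 3, h 4 2, h 5 1, h 6 0]
  · have h₁ : 0 ≤ (b - t) ^ 5 := pow_nonneg (by linarith) 5
    have h₂ : 0 ≤ (2 * t - 1) * (1 - t) ^ 5 :=
      mul_nonneg (by linarith) (pow_nonneg (by linarith) 5)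
    linarith

theorem lobatto4_kernel_nonneg {a b t : ℝ} (ha : 447 / 1000 ≤ a) (hab : a ≤ b)
    (hb : 1549 / 2000 ≤ b) (hb1 : b ≤ 1) (ht : 0 ≤ t) (hta : t ≤ a) :
    0 ≤ 10 / 3 * (b - t) ^ 5 + 5 * (a - t) ^ 5 - (1 - 2 * t) * (1 - t) ^ 5 := by
  rcases le_total t (3 / 20) with hth | hth
  · have h₀ : 0 ≤ 1549 / 2000 - t := by linarith
    have h₁ : 0 ≤ 447 / 1000 - t := by linarith
    have hmono₀ : (1549 / 2000 - t) ^ 5 ≤ (b - t) ^ 5 := by gcongr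
    have hmono₁ : (447 / 1000 - t) ^ 5 ≤ (a - t) ^ 5 := by gcongr
    have hv : 0 ≤ 3 / 20 - t := by linarith
    have h (i j : ℕ) : 0 ≤ t ^ i * (3 / 20 - t) ^ j := by positivity
    linarith [h 0 6, h 1 5, h 2 4, h 3 3, h 4 2, h 5 1, h 6 0]
  · have h₁ : 0 ≤ (a - t) ^ 5 := pow_nonneg (by linarith) 5
    linarith [lobatto4_kernel_nonneg_of_le hb hth (hta.trans hab) hb1]

/-- The comparison for even functions: `g 1` is the function, `g 0` its primitive and `g k` its
derivative of order `k - 1`. -/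
theorem gauss3_lobatto4_even {g : ℕ → ℝ → ℝ}
    (hc : ∀ k ≤ 6, ContinuousOn (g k) (Set.Icc 0 1))
    (hd : ∀ k ≤ 6, ∀ t ∈ Set.Ioo (0 : ℝ) 1, HasDerivAt (g k) (g (k + 1) t) t)
    (hpos : ∀ t ∈ Set.Ioo (0 : ℝ) 1, 0 ≤ g 7 t)
    (h0 : g 0 0 = 0) (h2 : g 2 0 = 0) (h4 : g 4 0 = 0) (h6 : g 6 0 = 0)
    {a b : ℝ} (ha0 : 0 ≤ a) (hb0 : 0 ≤ b) (ha : a ^ 2 = 1 / 5) (hb : b ^ 2 = 3 / 5) :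
    5 / 9 * g 1 b + 4 / 9 * g 1 0 ≤ g 0 1 ∧
      2 * g 0 1 ≤
        1 / 6 * g 1 1 + 5 / 6 * g 1 a + 5 / 9 * g 1 b + 4 / 9 * g 1 0 := by
  have ha_lower : 447 / 1000 ≤ a := by nlinarith
  have ha_upper : a ≤ 1 / 2 := by nlinarith
  have hb_lower : 1549 / 2000 ≤ b := by nlinarith
  have hb_upper : b ≤ 31 / 40 := by nlinarith
  have hab : a ≤ b := by linarith
  have hb1 : b ≤ 1 := by linarith
  have hvalue₀ : taylorSum g 6 1 0 = g 1 0 + g 3 0 / 6 + g 5 0 / 120 := by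
    simp [taylorSum, Finset.sum_range_succ, Nat.factorial, h0, h2, h4, h6]
    ring
  have hvalue₁ (c : ℝ) : taylorSum (fun k => g (k + 1)) 5 c 0 =
      g 1 0 + c ^ 2 / 2 * g 3 0 + (c ^ 2) ^ 2 / 24 * g 5 0 := by
    simp only [taylorSum, Finset.sum_range_succ, Finset.sum_range_zero, Nat.factorial, zero_add,
      Nat.reduceAdd, h2, h4, h6]
    push_cast
    ring
  have hvalue_a := hvalue₁ a
  have hvalue_b := hvalue₁ b
  rw [ha] at hvalue_a
  rw [hb] at hvalue_b
  have hself₀ := taylorSum_self g 6 1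
  have hself₁ (c : ℝ) : taylorSum (fun k => g (k + 1)) 5 c c = g 1 c := taylorSum_self _ 5 c
  have hmono := weighted_taylorSum_le hc hd hpos
  constructor
  · have hright := hmono 1 0 0 0 a b hb0 hb1 le_rfl fun t ht => by
      have : 0 ≤ (1 - t) ^ 6 := by positivity
      linarith
    have hleft := hmono 1 0 (-(5 / 9)) 0 a b le_rfl hb0 hb1 fun t ht => by
      linarith [gauss3_kernel_nonneg hb_upper ht.1.le ht.2.le]
    rw [hself₁ b] at hleft
    linarith
  · have hright := hmono (-2) (1 / 6) 0 0 a b hb0 hb1 le_rfl fun t ht => by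
      have : 0 ≤ (2 * t - 1) * (1 - t) ^ 5 :=
        mul_nonneg (by linarith [ht.1]) (pow_nonneg (by linarith [ht.2]) 5)
      linarith
    have hmid := hmono (-2) (1 / 6) (5 / 9) 0 a b ha0 hab hb1 fun t ht => by
      linarith [lobatto4_kernel_nonneg_of_le hb_lower (by linarith [ht.1]) ht.2.le hb1]
    have hleft := hmono (-2) (1 / 6) (5 / 9) (5 / 6) a b le_rfl ha0 (hab.trans hb1) fun t ht => by
      linarith [lobatto4_kernel_nonneg ha_lower hab hb_lower hb1 ht.1.le ht.2.le]
    rw [hself₁ a] at hleft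
    rw [hself₁ b] at hmid
    rw [hself₁ 1] at hright
    linarith [hvalue₁ 1]

theorem hasDerivAt_iteratedDerivWithin {f : ℝ → ℝ} {a b : ℝ} {n k : ℕ}
    (hf : ContDiffOn ℝ n f (Set.Icc a b)) (hk : k < n) {t : ℝ} (ht : t ∈ Set.Ioo a b) :
    HasDerivAt (iteratedDerivWithin k f (Set.Icc a b))
      (iteratedDerivWithin (k + 1) f (Set.Icc a b) t) t := by
  have hs := uniqueDiffOn_Icc (ht.1.trans ht.2)
  rw [iteratedDerivWithin_succ]
  exact (hf.differentiableOn_iteratedDerivWithin (by exact_mod_cast hk) hs t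
    (Set.Ioo_subset_Icc_self ht)).hasDerivWithinAt.hasDerivAt (Icc_mem_nhds ht.1 ht.2)

/-- The even part of `f` on `[-1, 1]` (doubled), preceded by its primitive and followed by its
derivatives. -/
noncomputable def evenPartDerivs (f : ℝ → ℝ) : ℕ → ℝ → ℝ
  | 0, t => ∫ x in (-t)..t, f x
  | k + 1, t => iteratedDerivWithin k f (Set.Icc (-1) 1) t +
      (-1) ^ k * iteratedDerivWithin k f (Set.Icc (-1) 1) (-t)

theorem evenPartDerivs_one (f : ℝ → ℝ) (t : ℝ) : evenPartDerivs f 1 t = f t + f (-t) := by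
  simp [evenPartDerivs]

theorem evenPartDerivs_zero_eq {f : ℝ → ℝ} (hf : ContinuousOn f (Set.Icc (-1) 1)) {t : ℝ}
    (ht : t ∈ Set.Icc (0 : ℝ) 1) :
    evenPartDerivs f 0 t = (∫ x in (0 : ℝ)..t, f x) - ∫ x in (0 : ℝ)..(-t), f x := by
  have hint {u : ℝ} (hu : u ∈ Set.Icc (-1 : ℝ) 1) :
      IntervalIntegrable f MeasureTheory.volume 0 u :=
    (hf.mono (Set.uIcc_subset_Icc (by norm_num) hu)).intervalIntegrable
  exact (intervalIntegral.integral_interval_sub_left (hint ⟨by linarith [ht.1], ht.2⟩)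
    (hint ⟨by linarith [ht.2], by linarith [ht.1]⟩)).symm

theorem continuousOn_evenPartDerivs {f : ℝ → ℝ} {n k : ℕ}
    (hf : ContDiffOn ℝ n f (Set.Icc (-1) 1)) (hk : k ≤ n + 1) :
    ContinuousOn (evenPartDerivs f k) (Set.Icc 0 1) := by
  have hsub : Set.Icc (0 : ℝ) 1 ⊆ Set.Icc (-1) 1 := Set.Icc_subset_Icc_left (by norm_num)
  have hneg : Set.MapsTo (fun t : ℝ => -t) (Set.Icc 0 1) (Set.Icc (-1) 1) :=
    fun t ht => ⟨by linarith [ht.2], by linarith [ht.1]⟩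
  cases k with
  | zero =>
    have hint : IntervalIntegrable f MeasureTheory.volume (-1) 1 :=
      ContinuousOn.intervalIntegrable_of_Icc (by norm_num) hf.continuousOn
    have hprim : ContinuousOn (fun u => ∫ x in (0 : ℝ)..u, f x) (Set.Icc (-1) 1) := by
      have h := intervalIntegral.continuousOn_primitive_interval' (a := 0) hint (by simp)
      rwa [Set.uIcc_of_le (by norm_num)] at h
    exact ((hprim.mono hsub).sub (hprim.comp continuous_neg.continuousOn hneg)).congr
      fun t ht => evenPartDerivs_zero_eq hf.continuousOn ht
  | succ k =>
    have h := hf.continuousOn_iteratedDerivWithin (m := k) (by exact_mod_cast (by lia : k ≤ n))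
      (uniqueDiffOn_Icc (by norm_num))
    exact (h.mono hsub).add ((h.comp continuous_neg.continuousOn hneg).const_mul _)

theorem hasDerivAt_evenPartDerivs {f : ℝ → ℝ} {n k : ℕ}
    (hf : ContDiffOn ℝ n f (Set.Icc (-1) 1)) (hk : k ≤ n) {t : ℝ} (ht : t ∈ Set.Ioo (0 : ℝ) 1) :
    HasDerivAt (evenPartDerivs f k) (evenPartDerivs f (k + 1) t) t := by
  have hpos : t ∈ Set.Ioo (-1 : ℝ) 1 := ⟨by linarith [ht.1], ht.2⟩
  have hneg : -t ∈ Set.Ioo (-1 : ℝ) 1 := ⟨by linarith [ht.2], by linarith [ht.1]⟩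
  cases k with
  | zero =>
    have hprim {u : ℝ} (hu : u ∈ Set.Ioo (-1 : ℝ) 1) :
        HasDerivAt (fun u => ∫ x in (0 : ℝ)..u, f x) (f u) u := by
      refine intervalIntegral.integral_hasDerivAt_right
        (hf.continuousOn.mono (Set.uIcc_subset_Icc (by norm_num)
          (Set.Ioo_subset_Icc_self hu))).intervalIntegrable
        ((hf.continuousOn.mono Set.Ioo_subset_Icc_self).stronglyMeasurableAtFilter isOpen_Ioo u hu)
        (hf.continuousOn.continuousAt (Icc_mem_nhds hu.1 hu.2))
    have h := (hprim hpos).sub ((hprim hneg).comp t (hasDerivAt_neg t))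
    rw [evenPartDerivs_one]
    refine (h.congr_of_eventuallyEq ?_).congr_deriv (by ring)
    filter_upwards [Ioo_mem_nhds ht.1 ht.2] with u hu
    exact evenPartDerivs_zero_eq hf.continuousOn (Set.Ioo_subset_Icc_self hu)
  | succ k =>
    have h := (hasDerivAt_iteratedDerivWithin hf hk hpos).add
      (((hasDerivAt_iteratedDerivWithin hf hk hneg).comp t (hasDerivAt_neg t)).const_mul
        ((-1) ^ k))
    exact h.congr_deriv (by simp only [evenPartDerivs]; ring)

theorem gauss3_remainder_le_lobatto4_remainder (f : ℝ → ℝ)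
    (hf : ContDiffOn ℝ 6 f (Set.Icc (-1:ℝ) 1))
    (h6 : ∀ x ∈ Set.Icc (-1:ℝ) 1, 0 ≤ iteratedDerivWithin 6 f (Set.Icc (-1:ℝ) 1) x) :
    0 ≤ (∫ t in (-1:ℝ)..1, f t) -
        ((5 / 9) * f (-(Real.sqrt 15) / 5) + (8 / 9) * f 0 + (5 / 9) * f (Real.sqrt 15 / 5)) ∧
    (∫ t in (-1:ℝ)..1, f t) -
        ((5 / 9) * f (-(Real.sqrt 15) / 5) + (8 / 9) * f 0 + (5 / 9) * f (Real.sqrt 15 / 5)) ≤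
      ((1 / 6) * f (-1) + (5 / 6) * f (-(Real.sqrt 5) / 5) + (5 / 6) * f (Real.sqrt 5 / 5) +
        (1 / 6) * f 1) - ∫ t in (-1:ℝ)..1, f t := by
  have hpos : ∀ t ∈ Set.Ioo (0 : ℝ) 1, 0 ≤ evenPartDerivs f 7 t := fun t ht => by
    have h₁ := h6 t ⟨by linarith [ht.1], ht.2.le⟩
    have h₂ := h6 (-t) ⟨by linarith [ht.2], by linarith [ht.1]⟩
    simp only [evenPartDerivs]
    linarith
  have hsqrt5 : (Real.sqrt 5 / 5) ^ 2 = 1 / 5 := by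
    rw [div_pow, Real.sq_sqrt (by norm_num)]; norm_num
  have hsqrt15 : (Real.sqrt 15 / 5) ^ 2 = 3 / 5 := by
    rw [div_pow, Real.sq_sqrt (by norm_num)]; norm_num
  have h := gauss3_lobatto4_even
    (fun k hk => continuousOn_evenPartDerivs (n := 6) hf (by lia))
    (fun k hk t ht => hasDerivAt_evenPartDerivs (n := 6) hf hk ht) hpos
    (by simp [evenPartDerivs]) (by simp [evenPartDerivs])
    (by norm_num [evenPartDerivs]) (by norm_num [evenPartDerivs])
    (by positivity) (by positivity) hsqrt5 hsqrt15
  simp only [evenPartDerivs_one, neg_zero] at h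
  simp only [evenPartDerivs] at h
  rw [neg_div, neg_div]
  constructor <;> linarith [h.1, h.2]
end
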